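/- arXiv:1603.05026 — 2 statements merged into one kernel-verified Lean document; each statement's English description precedes it below -/
import Mathlib

section
/- The image of the open unit disc D = {z : |z| < 1} under the Koebe function k(z) = z / (1 - z)² equals the complement in ℂ of the real ray (-∞, -1/4]; that is, k '' D = {w : ℂ | ¬(w.im = 0 ∧ w.re ≤ -1/4)}. -/
theorem koebe_aux (u : ℂ) : ‖u - 1‖ < ‖u + 1‖ ↔ 0 < u.re := by
  rw [← sq_lt_sq₀ (norm_nonneg _) (norm_nonneg _), ← Complex.normSq_eq_norm_sq,
    ← Complex.normSq_eq_norm_sq, Complex.normSq_apply, Complex.normSq_apply]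
  simp only [Complex.sub_re, Complex.sub_im, Complex.add_re, Complex.add_im, Complex.one_re,
    Complex.one_im]
  constructor <;> intro h <;> nlinarith

/-- The image of the open unit disc under the Koebe function `k z = z / (1 - z)^2`
is the complement of the real ray `(-∞, -1/4]`. -/
theorem koebe_function_image :
    (fun z : ℂ => z / (1 - z) ^ 2) '' Metric.ball (0 : ℂ) 1
      = {w : ℂ | ¬(w.im = 0 ∧ w.re ≤ -(1 / 4))} := by
  ext w
  simp only [Set.mem_image, Metric.mem_ball, dist_zero_right, Set.mem_setOf_eq]
  constructor
  · rintro ⟨z, hz, rfl⟩ ⟨him, hre⟩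
    have h1 : (1 - z) ≠ 0 := by
      intro h
      have : z = 1 := by linear_combination -h
      simp [this] at hz
    obtain ⟨u, hu⟩ : ∃ u, u = (1 + z) / (1 - z) := ⟨_, rfl⟩
    have hpos : 0 < u.re := by
      rw [← koebe_aux]
      have e1 : u - 1 = z * (2 / (1 - z)) := by rw [hu]; field_simp; ring
      have e2 : u + 1 = 2 / (1 - z) := by rw [hu]; field_simp; ring
      have h2 : 0 < ‖2 / (1 - z)‖ := norm_pos_iff.2 (div_ne_zero two_ne_zero h1)
      rw [e1, e2, norm_mul]
      nlinarith
    have hk : u * u = 1 + 4 * (z / (1 - z) ^ 2) := by rw [hu]; field_simp; ring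
    generalize z / (1 - z) ^ 2 = w at *
    have a := congrArg Complex.re hk
    have b := congrArg Complex.im hk
    simp [him] at a b
    have hui : u.im = 0 := by
      have : u.re * u.im = 0 := by linarith
      exact (mul_eq_zero.1 this).resolve_left hpos.ne'
    rw [hui] at a
    nlinarith
  · intro hw
    obtain ⟨u, hpos, hk⟩ : ∃ u : ℂ, 0 < u.re ∧ u * u = 1 + 4 * w := by
      obtain ⟨u, hu⟩ := IsAlgClosed.exists_pow_nat_eq (1 + 4 * w) (n := 2) two_pos
      rw [pow_two] at hu
      rcases lt_trichotomy u.re 0 with h | h | h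
      · exact ⟨-u, by simpa using h, by simpa using hu⟩
      · exfalso
        apply hw
        have a := congrArg Complex.re hu
        have b := congrArg Complex.im hu
        simp [h] at a b
        exact ⟨b, by nlinarith⟩
      · exact ⟨u, h, hu⟩
    have h1 : u + 1 ≠ 0 := by
      intro h
      have := congrArg Complex.re h
      simp at this
      linarith
    refine ⟨(u - 1) / (u + 1), ?_, ?_⟩
    · rw [norm_div, div_lt_one (norm_pos_iff.2 h1)]
      exact (koebe_aux u).2 hpos
    · have e : 1 - (u - 1) / (u + 1) = 2 / (u + 1) := by field_simp; ring
      rw [e]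
      field_simp
      linear_combination hk
end

section
/- The point -1/4 does not belong to the image of the open unit disc D = {z : |z| < 1} under the Koebe function k(z) = z / (1 - z)². Consequently, the constant 1/4 in the Koebe quarter theorem is sharp: there is no r > 1/4 such that Metric.ball (0 : ℂ) r ⊆ k '' D. -/
/-- Sharpness of the Koebe quarter theorem: `-1/4` is not in the image of the
unit disc under the Koebe function `k z = z / (1 - z)^2`, and consequently no
ball of radius `r > 1/4` about `0` is contained in that image. -/
theorem koebe_quarter_sharp :
    (-(1 / 4) : ℂ) ∉ (fun z : ℂ => z / (1 - z) ^ 2) '' Metric.ball (0 : ℂ) 1 ∧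
    ¬ ∃ r : ℝ, 1 / 4 < r ∧
      Metric.ball (0 : ℂ) r ⊆ (fun z : ℂ => z / (1 - z) ^ 2) '' Metric.ball (0 : ℂ) 1 := by
  have key : (-(1 / 4) : ℂ) ∉ (fun z : ℂ => z / (1 - z) ^ 2) '' Metric.ball (0 : ℂ) 1 := by
    rintro ⟨z, hz, h⟩
    have hz1 : ‖z‖ < 1 := by simpa using hz
    have hne : (1 - z) ≠ 0 := by
      intro h0
      have h1 : z = 1 := (sub_eq_zero.mp h0).symm
      rw [h1] at hz1
      simp at hz1
    have h2 : z = -(1 / 4) * (1 - z) ^ 2 := (div_eq_iff (pow_ne_zero 2 hne)).mp h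
    have h3 : (z + 1) ^ 2 = 0 := by linear_combination 4 * h2
    have h4 : z = -1 := eq_neg_of_add_eq_zero_left (pow_eq_zero_iff (two_ne_zero) |>.mp h3)
    rw [h4] at hz1
    simp at hz1
  refine ⟨key, ?_⟩
  rintro ⟨r, hr, hsub⟩
  apply key
  apply hsub
  rw [mem_ball_zero_iff, norm_neg]
  have : ‖(1 / 4 : ℂ)‖ = 1 / 4 := by norm_num
  rw [this]
  exact hr
end
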